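/- The subgroup of GL(3,ℂ) generated by σ and ρ equals the subgroup S(2,1) generated by α′, β′, γ′; in particular ⟨σ, ρ⟩ is isomorphic to SL(2,5). -/

import Mathlib

noncomputable section
open Matrix

def zeta5 : ℂ := Complex.exp (2 * Real.pi * Complex.I / 5)

def sqrt5 : ℂ := zeta5 - zeta5 ^ 2 - zeta5 ^ 3 + zeta5 ^ 4

def alpha : Matrix (Fin 2) (Fin 2) ℂ := -(Matrix.of ![![zeta5 ^ 3, 0], ![0, zeta5 ^ 2]])
def beta : Matrix (Fin 2) (Fin 2) ℂ := Matrix.of ![![0, 1], ![-1, 0]]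
def gamma : Matrix (Fin 2) (Fin 2) ℂ :=
  (zeta5 ^ 2 - zeta5 ^ 3)⁻¹ •
    Matrix.of ![![zeta5 + zeta5⁻¹, 1], ![1, -(zeta5 + zeta5⁻¹)]]

/-- The block-diagonal embedding of a `2 × 2` matrix into `GL(3)`, with last diagonal entry 1. -/
def emb (A : Matrix (Fin 2) (Fin 2) ℂ) : Matrix (Fin 3) (Fin 3) ℂ :=
  Matrix.of ![![A 0 0, A 0 1, 0], ![A 1 0, A 1 1, 0], ![0, 0, 1]]

def alpha' : Matrix (Fin 3) (Fin 3) ℂ := emb alpha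
def beta' : Matrix (Fin 3) (Fin 3) ℂ := emb beta
def gamma' : Matrix (Fin 3) (Fin 3) ℂ := emb gamma

def sigma : Matrix (Fin 3) (Fin 3) ℂ :=
  Matrix.of ![![(zeta5 - zeta5 ^ 4) / sqrt5, (zeta5 ^ 3 - zeta5 ^ 2) / sqrt5, 0],
    ![(zeta5 ^ 3 - zeta5 ^ 2) / sqrt5, -((zeta5 - zeta5 ^ 4) / sqrt5), 0],
    ![0, 0, 1]]

def tau : Matrix (Fin 3) (Fin 3) ℂ := Matrix.diagonal ![zeta5, 1, 1]

def rho : Matrix (Fin 3) (Fin 3) ℂ := Matrix.diagonal ![zeta5 ^ 3, zeta5 ^ 2, 1]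

/-- The subgroup of `GL(3, ℂ)` generated by the invertible matrices in `S`. -/
def gen3 (S : Set (Matrix (Fin 3) (Fin 3) ℂ)) : Subgroup (GL (Fin 3) ℂ) :=
  Subgroup.closure {g : GL (Fin 3) ℂ | (g : Matrix (Fin 3) (Fin 3) ℂ) ∈ S}

/-- `S(2,1) = ⟨α', β', γ'⟩`. -/
def S21 : Subgroup (GL (Fin 3) ℂ) := gen3 {alpha', beta', gamma'}

abbrev SL25 := Matrix.SpecialLinearGroup (Fin 2) (ZMod 5)

/-- Relations satisfied by the generators on both sides. -/
structure IcoRel {M : Type*} [Group M] (s r b z : M) : Prop where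
  zs : Commute z s
  zr : Commute z r
  zb : Commute z b
  z2 : z ^ 2 = 1
  r5 : r ^ 5 = 1
  s2 : s * s = z
  b2 : b * b = z
  br : b * r = r ^ 4 * b
  k1 : s * r * s = r ^ 4 * s * r ^ 4
  k2 : s * r ^ 2 * s = r ^ 2 * s * b * r ^ 2
  k3 : s * r ^ 3 * s = z * r ^ 3 * s * b * r ^ 3
  k4 : s * r ^ 4 * s = z * r * s * r

theorem IcoRel.prod {M N : Type*} [Group M] [Group N] {s r b z : M} {s' r' b' z' : N}
    (h : IcoRel s r b z) (h' : IcoRel s' r' b' z') :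
    IcoRel (s, s') (r, r') (b, b') (z, z') := by
  constructor
  · exact h.zs.prod h'.zs
  · exact h.zr.prod h'.zr
  · exact h.zb.prod h'.zb
  · exact Prod.ext h.z2 h'.z2
  · exact Prod.ext h.r5 h'.r5
  · exact Prod.ext h.s2 h'.s2
  · exact Prod.ext h.b2 h'.b2
  · exact Prod.ext h.br h'.br
  · exact Prod.ext h.k1 h'.k1
  · exact Prod.ext h.k2 h'.k2
  · exact Prod.ext h.k3 h'.k3
  · exact Prod.ext h.k4 h'.k4

/-- Normal form words. -/
def IcoNF {M : Type*} [Group M] (s r b z x : M) : Prop :=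
  (∃ e i f : ℕ, x = z ^ e * r ^ i * b ^ f) ∨ (∃ e i j f : ℕ, x = z ^ e * r ^ i * s * r ^ j * b ^ f)

section abstract
variable {M : Type*} [Group M] {s r b z : M}

theorem IcoRel.br_pow (h : IcoRel s r b z) (n : ℕ) : b * r ^ n = r ^ (4 * n) * b := by
  induction n with
  | zero => simp
  | succ n ih => rw [pow_succ, ← mul_assoc, ih, mul_assoc, h.br, ← mul_assoc, ← pow_add]; ring_nf

theorem IcoRel.nf_r (h : IcoRel s r b z) {x : M} (hx : IcoNF s r b z x) :
    IcoNF s r b z (r * x) := by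
  rcases hx with ⟨e, i, f, rfl⟩ | ⟨e, i, j, f, rfl⟩
  · refine Or.inl ⟨e, i + 1, f, ?_⟩
    rw [pow_succ' r i]
    simp only [← mul_assoc]
    rw [(h.zr.pow_left e).eq]
  · refine Or.inr ⟨e, i + 1, j, f, ?_⟩
    rw [pow_succ' r i]
    simp only [← mul_assoc]
    rw [(h.zr.pow_left e).eq]

theorem IcoRel.pow_mod (h : IcoRel s r b z) (i : ℕ) : r ^ i = r ^ (i % 5) := by
  conv_lhs => rw [← Nat.mod_add_div i 5, pow_add, pow_mul, h.r5, one_pow, mul_one]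

theorem IcoRel.nf_s (h : IcoRel s r b z) {x : M} (hx : IcoNF s r b z x) :
    IcoNF s r b z (s * x) := by
  rcases hx with ⟨e, i, f, rfl⟩ | ⟨e, i, j, f, rfl⟩
  · refine Or.inr ⟨e, 0, i, f, ?_⟩
    simp only [← mul_assoc, pow_zero, mul_one]
    rw [(h.zs.pow_left e).eq]
  · have e1 : s * (z ^ e * r ^ i * s * r ^ j * b ^ f) =
        z ^ e * (s * r ^ i * s) * (r ^ j * b ^ f) := by
      simp only [← mul_assoc]
      rw [(h.zs.pow_left e).eq]
    rw [e1, h.pow_mod i]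
    have h5 : i % 5 < 5 := Nat.mod_lt _ (by norm_num)
    generalize i % 5 = k at h5
    interval_cases k
    · refine Or.inl ⟨e + 1, j, f, ?_⟩
      rw [pow_zero, mul_one, h.s2, pow_succ]
      simp only [mul_assoc]
    · refine Or.inr ⟨e, 4, 4 + j, f, ?_⟩
      rw [pow_one, h.k1, pow_add]
      simp only [mul_assoc]
    · refine Or.inr ⟨e, 2, 4 * (2 + j), 1 + f, ?_⟩
      have := h.br_pow (2 + j)
      rw [h.k2, pow_add b, pow_one]
      calc _ = z ^ e * r ^ 2 * s * (b * r ^ (2 + j)) * b ^ f := by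
            rw [pow_add]; simp only [mul_assoc]
        _ = _ := by rw [this]; simp only [mul_assoc]
    · refine Or.inr ⟨e + 1, 3, 4 * (3 + j), 1 + f, ?_⟩
      have := h.br_pow (3 + j)
      rw [h.k3, pow_add b, pow_one, pow_succ z]
      calc _ = z ^ e * z * r ^ 3 * s * (b * r ^ (3 + j)) * b ^ f := by
            rw [pow_add]; simp only [mul_assoc]
        _ = _ := by rw [this]; simp only [mul_assoc]
    · refine Or.inr ⟨e + 1, 1, 1 + j, f, ?_⟩
      rw [h.k4, pow_add r, pow_succ z, pow_one]
      simp only [mul_assoc]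

theorem IcoRel.s_inv (h : IcoRel s r b z) : s⁻¹ = s * s * s := by
  rw [inv_eq_iff_mul_eq_one, ← mul_assoc, ← mul_assoc, h.s2, mul_assoc, h.s2, ← pow_two, h.z2]

theorem IcoRel.r_inv (h : IcoRel s r b z) : r⁻¹ = r * r * r * r := by
  rw [inv_eq_iff_mul_eq_one, ← h.r5]; simp only [pow_succ, pow_zero, one_mul, mul_assoc]

theorem IcoRel.nf (h : IcoRel s r b z) {x : M} (hx : x ∈ Subgroup.closure {s, r}) :
    IcoNF s r b z x := by
  induction hx using Subgroup.closure_induction_left with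
  | one => exact Or.inl ⟨0, 0, 0, by simp⟩
  | mul_left x hx y hy ih =>
    rcases hx with rfl | rfl
    · exact h.nf_s ih
    · exact h.nf_r ih
  | inv_mul_cancel x hx y hy ih =>
    rcases hx with rfl | rfl
    · rw [h.s_inv, mul_assoc, mul_assoc]
      exact h.nf_s (h.nf_s (h.nf_s ih))
    · rw [h.r_inv, mul_assoc, mul_assoc, mul_assoc]
      exact h.nf_r (h.nf_r (h.nf_r (h.nf_r ih)))

theorem IcoRel.s_mem : s ∈ Subgroup.closure {s, r} := Subgroup.subset_closure (by simp)
theorem IcoRel.r_mem : r ∈ Subgroup.closure {s, r} := Subgroup.subset_closure (by simp)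
theorem IcoRel.z_mem (h : IcoRel s r b z) : z ∈ Subgroup.closure {s, r} := by
  rw [← h.s2]; exact mul_mem s_mem s_mem
theorem IcoRel.b_mem (h : IcoRel s r b z) : b ∈ Subgroup.closure {s, r} := by
  have hs := IcoRel.s_mem (s := s) (r := r)
  have hr := IcoRel.r_mem (s := s) (r := r)
  have : b = s⁻¹ * (r ^ 2)⁻¹ * (s * r ^ 2 * s) * (r ^ 2)⁻¹ := by rw [h.k2]; group
  rw [this]
  exact mul_mem (mul_mem (mul_mem (inv_mem hs) (inv_mem (pow_mem hr 2)))
    (mul_mem (mul_mem hs (pow_mem hr 2)) hs)) (inv_mem (pow_mem hr 2))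

theorem IcoRel.nf_mem (h : IcoRel s r b z) {x : M} (hx : IcoNF s r b z x) :
    x ∈ Subgroup.closure {s, r} := by
  have hs := IcoRel.s_mem (s := s) (r := r)
  have hr := IcoRel.r_mem (s := s) (r := r)
  have hz := h.z_mem
  have hb := h.b_mem
  rcases hx with ⟨e, i, f, rfl⟩ | ⟨e, i, j, f, rfl⟩
  · exact mul_mem (mul_mem (pow_mem hz _) (pow_mem hr _)) (pow_mem hb _)
  · exact mul_mem (mul_mem (mul_mem (mul_mem (pow_mem hz _) (pow_mem hr _)) hs) (pow_mem hr _))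
      (pow_mem hb _)

/-- Bounded exponents. -/
theorem IcoRel.nf_bdd (h : IcoRel s r b z) {x : M} (hx : IcoNF s r b z x) :
    (∃ e < 2, ∃ i < 5, ∃ f < 2, x = z ^ e * r ^ i * b ^ f) ∨
    (∃ e < 2, ∃ i < 5, ∃ j < 5, ∃ f < 2, x = z ^ e * r ^ i * s * r ^ j * b ^ f) := by
  have hb : ∀ f : ℕ, b ^ f = z ^ (f / 2) * b ^ (f % 2) := by
    intro f
    conv_lhs => rw [← Nat.div_add_mod f 2, pow_add, pow_mul, pow_two, h.b2]
  have hz : ∀ e : ℕ, z ^ e = z ^ (e % 2) := by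
    intro e
    conv_lhs => rw [← Nat.mod_add_div e 2, pow_add, pow_mul, h.z2, one_pow, mul_one]
  have l2 : ∀ e : ℕ, e % 2 < 2 := fun e => Nat.mod_lt _ (by norm_num)
  have l5 : ∀ e : ℕ, e % 5 < 5 := fun e => Nat.mod_lt _ (by norm_num)
  rcases hx with ⟨e, i, f, rfl⟩ | ⟨e, i, j, f, rfl⟩
  · refine Or.inl ⟨(e + f / 2) % 2, l2 _, i % 5, l5 _, f % 2, l2 _, ?_⟩
    rw [← hz, ← h.pow_mod, hb f, pow_add]
    have := ((h.zr.pow_left (f / 2)).pow_right i).eq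
    simp only [mul_assoc]
    rw [← mul_assoc (z ^ (f / 2)) (r ^ i), this]
    simp only [mul_assoc]
  · refine Or.inr ⟨(e + f / 2) % 2, l2 _, i % 5, l5 _, j % 5, l5 _, f % 2, l2 _, ?_⟩
    rw [← hz, ← h.pow_mod, ← h.pow_mod, hb f, pow_add]
    have : Commute (z ^ (f / 2)) (r ^ i * s * r ^ j) :=
      (((h.zr.pow_right i).mul_right h.zs).mul_right (h.zr.pow_right j)).pow_left _
    calc _ = z ^ e * ((r ^ i * s * r ^ j) * z ^ (f / 2)) * b ^ (f % 2) := by simp only [mul_assoc]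
      _ = _ := by rw [← this.eq]; simp only [mul_assoc]

end abstract

/-! ### The finite side -/

def s5 : SL25 := ⟨!![0, 4; 1, 0], by decide⟩
def r5 : SL25 := ⟨!![1, 1; 0, 1], by decide⟩
def b5 : SL25 := ⟨!![2, 0; 0, 3], by decide⟩
def z5 : SL25 := ⟨!![4, 0; 0, 4], by decide⟩

theorem rel5 : IcoRel s5 r5 b5 z5 := by
  constructor
  all_goals (try unfold Commute SemiconjBy); decide

theorem nf5_one_left : ∀ e < 2, ∀ i < 5, ∀ f < 2, z5 ^ e * r5 ^ i * b5 ^ f ≠ 1 ∨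
    (e = 0 ∧ i = 0 ∧ f = 0) := by
  decide +kernel

theorem nf5_one_right : ∀ e < 2, ∀ i < 5, ∀ j < 5, ∀ f < 2,
    z5 ^ e * r5 ^ i * s5 * r5 ^ j * b5 ^ f ≠ 1 := by
  decide +kernel

theorem nf5_surj_aux : ∀ a b c d : ZMod 5, a * d - b * c = 1 →
    (∃ e < 2, ∃ i < 5, ∃ f < 2, (z5 ^ e * r5 ^ i * b5 ^ f).1 = !![a, b; c, d]) ∨
    (∃ e < 2, ∃ i < 5, ∃ j < 5, ∃ f < 2,
      (z5 ^ e * r5 ^ i * s5 * r5 ^ j * b5 ^ f).1 = !![a, b; c, d]) := by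
  decide +kernel

theorem nf5_surj (g : SL25) : IcoNF s5 r5 b5 z5 g := by
  have hd := g.2
  rw [Matrix.det_fin_two] at hd
  rcases nf5_surj_aux _ _ _ _ hd with ⟨e, -, i, -, f, -, h⟩ | ⟨e, -, i, -, j, -, f, -, h⟩
  · refine Or.inl ⟨e, i, f, Subtype.ext ?_⟩
    rw [h]; exact Matrix.eta_fin_two _
  · refine Or.inr ⟨e, i, j, f, Subtype.ext ?_⟩
    rw [h]; exact Matrix.eta_fin_two _

/-! ### The complex side -/

theorem zeta5_prim : IsPrimitiveRoot zeta5 5 := by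
  have := Complex.isPrimitiveRoot_exp 5 (by norm_num)
  simpa [zeta5] using this

theorem zeta5_sum : 1 + zeta5 + zeta5 ^ 2 + zeta5 ^ 3 + zeta5 ^ 4 = 0 := by
  have := zeta5_prim.geom_sum_eq_zero (by norm_num)
  simpa [Finset.sum_range_succ] using this

theorem zeta5_pow : zeta5 ^ 5 = 1 := zeta5_prim.pow_eq_one
theorem zeta5_ne : zeta5 ≠ 0 := zeta5_prim.ne_zero (by norm_num)

theorem sqrt5_sq : sqrt5 ^ 2 = 5 := by
  have h := zeta5_sum
  unfold sqrt5
  grind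

theorem sqrt5_ne : sqrt5 ≠ 0 := by
  intro h
  have := sqrt5_sq
  rw [h] at this
  norm_num at this

def ca : ℂ := (zeta5 - zeta5 ^ 4) / sqrt5
def cb : ℂ := (zeta5 ^ 3 - zeta5 ^ 2) / sqrt5

theorem ca_eq : ca = (zeta5 + 2 * zeta5 ^ 2 - 2 * zeta5 ^ 3 - zeta5 ^ 4) / 5 := by
  have h := zeta5_sum
  unfold ca
  rw [div_eq_div_iff sqrt5_ne (by norm_num)]
  unfold sqrt5
  grind

theorem cb_eq : cb = (-2 * zeta5 + zeta5 ^ 2 - zeta5 ^ 3 + 2 * zeta5 ^ 4) / 5 := by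
  have h := zeta5_sum
  unfold cb
  rw [div_eq_div_iff sqrt5_ne (by norm_num)]
  unfold sqrt5
  grind

theorem ca_ne : ca ≠ 0 := by
  refine div_ne_zero ?_ sqrt5_ne
  intro h
  have := zeta5_prim.pow_inj (i := 1) (j := 4) (by norm_num) (by norm_num)
    (by rw [pow_one]; exact sub_eq_zero.mp h)
  norm_num at this

theorem cb_ne : cb ≠ 0 := by
  refine div_ne_zero ?_ sqrt5_ne
  intro h
  have := zeta5_prim.pow_inj (i := 3) (j := 2) (by norm_num) (by norm_num) (sub_eq_zero.mp h)
  norm_num at this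

abbrev SL2C := Matrix.SpecialLinearGroup (Fin 2) ℂ

def sC : SL2C := ⟨!![ca, cb; cb, -ca], by
  have h := zeta5_sum
  rw [Matrix.det_fin_two_of, ca_eq, cb_eq]
  grind⟩
def rC : SL2C := ⟨!![zeta5 ^ 3, 0; 0, zeta5 ^ 2], by
  have h := zeta5_pow
  rw [Matrix.det_fin_two_of]
  linear_combination h⟩
def bC : SL2C := ⟨!![0, 1; -1, 0], by simp [Matrix.det_fin_two_of]⟩
def zC : SL2C := ⟨!![-1, 0; 0, -1], by simp [Matrix.det_fin_two_of]⟩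

theorem rC_pow (i : ℕ) : (rC ^ i).1 = !![(zeta5 ^ 3) ^ i, 0; 0, (zeta5 ^ 2) ^ i] := by
  induction i with
  | zero => simp [Matrix.one_fin_two]
  | succ n ih =>
    rw [pow_succ, Matrix.SpecialLinearGroup.coe_mul, ih]
    simp [rC, pow_succ]

theorem zC_pow (i : ℕ) : (zC ^ i).1 = !![(-1) ^ i, 0; 0, (-1) ^ i] := by
  induction i with
  | zero => simp [Matrix.one_fin_two]
  | succ n ih =>
    rw [pow_succ, Matrix.SpecialLinearGroup.coe_mul, ih]
    simp [zC, pow_succ]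

theorem SL2C_ext {A B : SL2C} (h : A.1 = B.1) : A = B := Subtype.ext h

theorem relC : IcoRel sC rC bC zC := by
  have h := zeta5_sum
  have h5 := zeta5_pow
  have one : (1 : SL2C).1 = !![1, 0; 0, 1] := Matrix.one_fin_two
  constructor
  all_goals
    (try unfold Commute SemiconjBy)
    apply SL2C_ext
    try simp only [Matrix.SpecialLinearGroup.coe_mul, rC_pow, zC_pow, one]
    try simp only [sC, rC, bC, zC, Matrix.mul_fin_two, ca_eq, cb_eq]
    congr! 3 <;> grind

theorem nfC_one_left {e i f : ℕ} (he : e < 2) (hi : i < 5) (hf : f < 2)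
    (h : zC ^ e * rC ^ i * bC ^ f = 1) : e = 0 ∧ i = 0 ∧ f = 0 := by
  have hz := zeta5_ne
  have h' := congrArg Subtype.val h
  rw [Matrix.SpecialLinearGroup.coe_mul, Matrix.SpecialLinearGroup.coe_mul, rC_pow, zC_pow] at h'
  interval_cases f
  · have h1 := congrFun (congrFun h' 1) 1
    simp [Matrix.mul_apply, Fin.sum_univ_two] at h1
    interval_cases e
    · have : 5 ∣ 2 * i := by
        apply zeta5_prim.dvd_of_pow_eq_one
        rw [pow_mul]; simpa using h1
      omega
    · exfalso
      have h2 : ((zeta5 ^ 2) ^ i) ^ 5 = 1 := by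
        rw [← pow_mul, ← pow_mul, show 2 * (i * 5) = 5 * (2 * i) by ring, pow_mul, zeta5_pow, one_pow]
      have h3 : (zeta5 ^ 2) ^ i = -1 := by linear_combination -h1
      rw [h3] at h2
      norm_num at h2
  · rw [pow_one] at h'
    have h1 := congrFun (congrFun h' 0) 1
    simp [Matrix.mul_apply, Fin.sum_univ_two, bC, hz] at h1

theorem nfC_one_right {e i j f : ℕ} (hf : f < 2) :
    zC ^ e * rC ^ i * sC * rC ^ j * bC ^ f ≠ 1 := by
  intro h
  have hz := zeta5_ne
  have ha := ca_ne
  have hb := cb_ne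
  have h' := congrArg Subtype.val h
  simp only [Matrix.SpecialLinearGroup.coe_mul, rC_pow, zC_pow] at h'
  interval_cases f
  · have h1 := congrFun (congrFun h' 0) 1
    simp [Matrix.mul_apply, Fin.sum_univ_two, sC, hz, ha, hb] at h1
  · rw [pow_one] at h'
    have h1 := congrFun (congrFun h' 0) 1
    simp [Matrix.mul_apply, Fin.sum_univ_two, sC, bC, hz, ha, hb] at h1

/-! ### The isomorphism -/

abbrev KK : Subgroup (SL2C × SL25) := Subgroup.closure {(sC, s5), (rC, r5)}

theorem relK : IcoRel (sC, s5) (rC, r5) (bC, b5) (zC, z5) := relC.prod rel5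

theorem KK_map_fst : KK.map (MonoidHom.fst SL2C SL25) = Subgroup.closure {sC, rC} := by
  rw [MonoidHom.map_closure, Set.image_pair]; rfl

theorem KK_map_snd : KK.map (MonoidHom.snd SL2C SL25) = ⊤ := by
  rw [MonoidHom.map_closure, Set.image_pair, eq_top_iff]
  intro g _
  exact rel5.nf_mem (nf5_surj g)

theorem KK_fst {x : SL2C × SL25} (hx : x ∈ KK) (h : x.1 = 1) : x = 1 := by
  rcases relK.nf_bdd (relK.nf hx) with ⟨e, he, i, hi, f, hf, rfl⟩ | ⟨e, he, i, hi, j, hj, f, hf, rfl⟩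
  · obtain ⟨rfl, rfl, rfl⟩ := nfC_one_left he hi hf h
    simp
  · exact absurd h (nfC_one_right hf)

theorem KK_snd {x : SL2C × SL25} (hx : x ∈ KK) (h : x.2 = 1) : x = 1 := by
  rcases relK.nf_bdd (relK.nf hx) with ⟨e, he, i, hi, f, hf, rfl⟩ | ⟨e, he, i, hi, j, hj, f, hf, rfl⟩
  · obtain ⟨rfl, rfl, rfl⟩ := (nf5_one_left e he i hi f hf).resolve_left (not_not_intro h)
    simp
  · exact absurd h (nf5_one_right e he i hi j hj f hf)

theorem iso_closure : Nonempty (Subgroup.closure {sC, rC} ≃* SL25) := by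
  let p1 : KK →* SL2C := (MonoidHom.fst SL2C SL25).comp KK.subtype
  let p2 : KK →* SL25 := (MonoidHom.snd SL2C SL25).comp KK.subtype
  have i1 : Function.Injective p1 := by
    rw [injective_iff_map_eq_one]
    intro a ha
    exact Subtype.ext (KK_fst a.2 ha)
  have i2 : Function.Injective p2 := by
    rw [injective_iff_map_eq_one]
    intro a ha
    exact Subtype.ext (KK_snd a.2 ha)
  have r1 : p1.range = Subgroup.closure {sC, rC} := by
    rw [MonoidHom.range_comp, Subgroup.range_subtype, KK_map_fst]
  have s2 : Function.Surjective p2 := by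
    rw [← MonoidHom.range_eq_top, MonoidHom.range_comp, Subgroup.range_subtype, KK_map_snd]
  exact ⟨((MulEquiv.subgroupCongr r1.symm).trans (MonoidHom.ofInjective i1).symm).trans
    (MulEquiv.ofBijective p2 ⟨i2, s2⟩)⟩

/-! ### Embedding into `GL(3)` -/

def embHom : Matrix (Fin 2) (Fin 2) ℂ →* Matrix (Fin 3) (Fin 3) ℂ where
  toFun := emb
  map_one' := by
    ext i j; fin_cases i <;> fin_cases j <;> simp [emb]
  map_mul' A B := by
    ext i j; fin_cases i <;> fin_cases j <;>
      simp [emb, Matrix.mul_apply, Fin.sum_univ_two, Fin.sum_univ_three]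

def EE : SL2C →* GL (Fin 3) ℂ := (Units.map embHom).comp Matrix.SpecialLinearGroup.toGL

theorem EE_coe (A : SL2C) : (EE A : Matrix (Fin 3) (Fin 3) ℂ) = emb A.1 := rfl

theorem EE_inj : Function.Injective EE := by
  intro A B h
  have h' : emb A.1 = emb B.1 := by rw [← EE_coe, ← EE_coe, h]
  apply SL2C_ext
  have h00 := congrFun (congrFun h' 0) 0
  have h01 := congrFun (congrFun h' 0) 1
  have h10 := congrFun (congrFun h' 1) 0
  have h11 := congrFun (congrFun h' 1) 1
  simp [emb] at h00 h01 h10 h11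
  ext i j; fin_cases i <;> fin_cases j <;> simpa

theorem sigma_eq : sigma = EE sC := by
  rw [EE_coe]; rfl

theorem rho_eq : rho = EE rC := by
  rw [EE_coe]
  ext i j; fin_cases i <;> fin_cases j <;> simp [rho, emb, rC]

theorem alpha_eq : alpha' = EE (zC * rC) := by
  rw [EE_coe, Matrix.SpecialLinearGroup.coe_mul]
  ext i j; fin_cases i <;> fin_cases j <;>
    simp [alpha', alpha, emb, rC, zC, Matrix.mul_apply, Fin.sum_univ_two]

theorem beta_eq : beta' = EE bC := by
  rw [EE_coe]; rfl

theorem gamma_aux : (zeta5 ^ 2 - zeta5 ^ 3)⁻¹ = -ca ∧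
    (zeta5 ^ 2 - zeta5 ^ 3)⁻¹ * (zeta5 + zeta5⁻¹) = cb := by
  have h := zeta5_sum
  have h5 := zeta5_pow
  have hi : zeta5⁻¹ = zeta5 ^ 4 := by
    rw [inv_eq_iff_eq_inv, eq_comm, inv_eq_of_mul_eq_one_left]
    linear_combination h5
  have h1 : (zeta5 ^ 2 - zeta5 ^ 3)⁻¹ = -ca := by
    apply inv_eq_of_mul_eq_one_right
    rw [ca_eq]
    grind
  refine ⟨h1, ?_⟩
  rw [h1, hi, ca_eq, cb_eq]
  grind

theorem gamma_eq : gamma' = EE (zC * sC * bC) := by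
  obtain ⟨h1, h2⟩ := gamma_aux
  have : gamma = !![cb, -ca; -ca, -cb] := by
    rw [gamma, ← h2, ← h1]
    ext i j; fin_cases i <;> fin_cases j <;> simp only [Matrix.smul_apply] <;> simp <;> ring
  rw [EE_coe, Matrix.SpecialLinearGroup.coe_mul, Matrix.SpecialLinearGroup.coe_mul, gamma', this]
  congr 1
  simp [sC, zC, bC]

theorem gen_sigma_rho : gen3 {sigma, rho} = (Subgroup.closure {sC, rC}).map EE := by
  rw [MonoidHom.map_closure, Set.image_pair, gen3]
  congr 1
  ext g
  simp only [Set.mem_ofPred_eq, Set.mem_insert_iff, Set.mem_singleton_iff, sigma_eq, rho_eq,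
    Units.val_inj]

theorem gen_abc : S21 = (Subgroup.closure {zC * rC, bC, zC * sC * bC}).map EE := by
  rw [MonoidHom.map_closure, Set.image_insert_eq, Set.image_pair, S21, gen3]
  congr 1
  ext g
  simp only [Set.mem_ofPred_eq, Set.mem_insert_iff, Set.mem_singleton_iff, alpha_eq, beta_eq,
    gamma_eq, Units.val_inj]

theorem closure_eq : Subgroup.closure {sC, rC} =
    Subgroup.closure {zC * rC, bC, zC * sC * bC} := by
  have h := relC
  apply le_antisymm
  · generalize hH : Subgroup.closure {zC * rC, bC, zC * sC * bC} = H
    have hb : bC ∈ H := hH ▸ Subgroup.subset_closure (by simp)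
    have hzr : zC * rC ∈ H := hH ▸ Subgroup.subset_closure (by simp)
    have hg : zC * sC * bC ∈ H := hH ▸ Subgroup.subset_closure (by simp)
    have hz : zC ∈ H := by
      rw [← h.b2]; exact mul_mem hb hb
    rw [Subgroup.closure_le]
    rintro x (rfl | rfl)
    · have : sC = zC⁻¹ * (zC * sC * bC) * bC⁻¹ := by group
      rw [this]
      exact mul_mem (mul_mem (inv_mem hz) hg) (inv_mem hb)
    · have : rC = zC⁻¹ * (zC * rC) := by group
      rw [this]
      exact mul_mem (inv_mem hz) hzr
  · rw [Subgroup.closure_le]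
    rintro x (rfl | rfl | rfl)
    · exact mul_mem h.z_mem IcoRel.r_mem
    · exact h.b_mem
    · exact mul_mem (mul_mem h.z_mem IcoRel.s_mem) h.b_mem

theorem stmt9 :
    gen3 {sigma, rho} = S21 ∧ Nonempty (gen3 {sigma, rho} ≃* SL25) := by
  refine ⟨by rw [gen_sigma_rho, gen_abc, closure_eq], ?_⟩
  obtain ⟨φ⟩ := iso_closure
  rw [gen_sigma_rho]
  exact ⟨(Subgroup.equivMapOfInjective _ EE EE_inj).symm.trans φ⟩
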